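/- For every 0 ≤ t < T, x ∈ ℝ and w > 0, the second derivative of the Black–Scholes call price with respect to the squared volatility satisfies ∂²_{ww} [BS(t,x,√w)] = ((T − t)²/4) · (∂²_{xx} − ∂_x)² BS(t,x,√w). In other words, ∂²_{σ²} BS(t,x,σ) = ((T−t)²/4)(∂²_x − ∂_x)² BS(t,x,σ). -/

import Mathlib

open Real MeasureTheory

/-- Standard normal cumulative distribution function. -/
noncomputable def stdNormalCDF (x : ℝ) : ℝ :=
  ∫ t in Set.Iic x, (Real.sqrt (2 * Real.pi))⁻¹ * Real.exp (-t ^ 2 / 2)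

/-- d₊ in the Black–Scholes formula. -/
noncomputable def dPlus (T K r t x y : ℝ) : ℝ :=
  (x - Real.log K + (r + y ^ 2 / 2) * (T - t)) / (y * Real.sqrt (T - t))

/-- d₋ in the Black–Scholes formula. -/
noncomputable def dMinus (T K r t x y : ℝ) : ℝ :=
  (x - Real.log K + (r - y ^ 2 / 2) * (T - t)) / (y * Real.sqrt (T - t))

/-- Black–Scholes call price with maturity `T`, strike `K`, interest rate `r`,
current time `t`, log spot price `x` and volatility `y`. -/
noncomputable def BS (T K r t x y : ℝ) : ℝ :=
  Real.exp x * stdNormalCDF (dPlus T K r t x y)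
    - K * Real.exp (-r * (T - t)) * stdNormalCDF (dMinus T K r t x y)

/-- The operator Γ := ∂²ₓₓ − ∂ₓ acting on functions of the log spot price. -/
noncomputable def GammaOp (f : ℝ → ℝ) : ℝ → ℝ :=
  fun x => deriv (deriv f) x - deriv f x

lemma aux_cdf (x : ℝ) : HasDerivAt stdNormalCDF
    ((Real.sqrt (2 * Real.pi))⁻¹ * Real.exp (-x ^ 2 / 2)) x := by
  have hc : Continuous (fun t : ℝ => (Real.sqrt (2 * Real.pi))⁻¹ * Real.exp (-t ^ 2 / 2)) := by
    fun_prop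
  have hi : Integrable (fun t : ℝ => (Real.sqrt (2 * Real.pi))⁻¹ * Real.exp (-t ^ 2 / 2)) := by
    have := (integrable_exp_neg_mul_sq (b := 1 / 2) (by norm_num)).const_mul
      (Real.sqrt (2 * Real.pi))⁻¹
    refine this.congr (Filter.Eventually.of_forall fun t => ?_)
    simp only
    congr 2
    ring
  have h := (intervalIntegral.integral_hasDerivAt_right (hc.intervalIntegrable 0 x)
    hc.aestronglyMeasurable.stronglyMeasurableAtFilter hc.continuousAt).const_add
      (stdNormalCDF 0)
  refine h.congr_of_eventuallyEq (Filter.Eventually.of_forall fun u => ?_)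
  have := intervalIntegral.integral_Iic_sub_Iic (μ := volume) (a := 0) (b := u)
    hi.integrableOn hi.integrableOn
  simp only [stdNormalCDF]
  rw [← this]
  ring

/-- The Gaussian density. -/
noncomputable def auxPhi (x : ℝ) : ℝ := (Real.sqrt (2 * Real.pi))⁻¹ * Real.exp (-x ^ 2 / 2)

/-- The function `Γ BS`. -/
noncomputable def auxV (τ K r x w : ℝ) : ℝ :=
  (Real.sqrt (2 * Real.pi))⁻¹ * Real.exp
    (x - (x - Real.log K + (r + w / 2) * τ) ^ 2 / (2 * (w * τ))) / (√w * √τ)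

lemma aux_plus (T K r t x w : ℝ) (htT : t < T) (hw : 0 < w) :
    Real.exp x * auxPhi (dPlus T K r t x (√w)) = √w * √(T - t) * auxV (T - t) K r x w := by
  have hτ : 0 < T - t := by linarith
  have h1 : 0 < √w := Real.sqrt_pos.2 hw
  have h2 : 0 < √(T - t) := Real.sqrt_pos.2 hτ
  have e1 : (√w) ^ 2 = w := Real.sq_sqrt hw.le
  have e2 : (√(T - t)) ^ 2 = T - t := Real.sq_sqrt hτ.le
  unfold auxPhi auxV dPlus
  rw [mul_div_cancel₀ _ (by positivity), mul_left_comm, ← Real.exp_add, e1]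
  congr 2
  rw [div_pow, mul_pow, e1, e2]
  field_simp
  ring

lemma aux_minus (T K r t x w : ℝ) (hK : 0 < K) (htT : t < T) (hw : 0 < w) :
    K * Real.exp (-r * (T - t)) * auxPhi (dMinus T K r t x (√w))
      = √w * √(T - t) * auxV (T - t) K r x w := by
  have hτ : 0 < T - t := by linarith
  have h1 : 0 < √w := Real.sqrt_pos.2 hw
  have h2 : 0 < √(T - t) := Real.sqrt_pos.2 hτ
  have e1 : (√w) ^ 2 = w := Real.sq_sqrt hw.le
  have e2 : (√(T - t)) ^ 2 = T - t := Real.sq_sqrt hτ.le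
  have e3 : K * Real.exp (-r * (T - t)) = Real.exp (Real.log K + -r * (T - t)) := by
    rw [Real.exp_add, Real.exp_log hK]
  unfold auxPhi auxV dMinus
  rw [mul_div_cancel₀ _ (by positivity), e3, mul_left_comm, ← Real.exp_add, e1]
  congr 2
  rw [div_pow, mul_pow, e1, e2]
  generalize T - t = τ at *
  field_simp
  ring

lemma aux_cdf_comp {f : ℝ → ℝ} {f' x : ℝ} (h : HasDerivAt f f' x) :
    HasDerivAt (fun u => stdNormalCDF (f u)) (auxPhi (f x) * f') x :=
  (aux_cdf (f x)).comp x h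

lemma aux_dPlus_x (T K r t x y : ℝ) :
    HasDerivAt (fun u => dPlus T K r t u y) (1 / (y * √(T - t))) x := by
  unfold dPlus
  exact (((hasDerivAt_id x).sub_const _).add_const _).div_const _

lemma aux_dMinus_x (T K r t x y : ℝ) :
    HasDerivAt (fun u => dMinus T K r t u y) (1 / (y * √(T - t))) x := by
  unfold dMinus
  exact (((hasDerivAt_id x).sub_const _).add_const _).div_const _

lemma aux_BS_x (T K r t x w : ℝ) (hK : 0 < K) (htT : t < T) (hw : 0 < w) :
    HasDerivAt (fun u => BS T K r t u (√w))
      (Real.exp x * stdNormalCDF (dPlus T K r t x (√w))) x := by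
  have hp := aux_plus T K r t x w htT hw
  have hm := aux_minus T K r t x w hK htT hw
  have h := ((Real.hasDerivAt_exp x).mul (aux_cdf_comp (aux_dPlus_x T K r t x (√w)))).sub
    ((aux_cdf_comp (aux_dMinus_x T K r t x (√w))).const_mul (K * Real.exp (-r * (T - t))))
  unfold BS
  refine h.congr_deriv ?_
  linear_combination (1 / (√w * √(T - t))) * (hp - hm)

lemma aux_BS_xx (T K r t x w : ℝ) (htT : t < T) (hw : 0 < w) :
    HasDerivAt (fun u => Real.exp u * stdNormalCDF (dPlus T K r t u (√w)))
      (Real.exp x * stdNormalCDF (dPlus T K r t x (√w)) + auxV (T - t) K r x w) x := by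
  have hτ : 0 < T - t := by linarith
  have h1 : 0 < √w := Real.sqrt_pos.2 hw
  have h2 : 0 < √(T - t) := Real.sqrt_pos.2 hτ
  have hp := aux_plus T K r t x w htT hw
  have h := ((Real.hasDerivAt_exp x).mul (aux_cdf_comp (aux_dPlus_x T K r t x (√w))))
  refine h.congr_deriv ?_
  rw [← mul_assoc, hp]
  field_simp

lemma aux_Gamma (T K r t w : ℝ) (hK : 0 < K) (htT : t < T) (hw : 0 < w) :
    GammaOp (fun x' => BS T K r t x' (√w)) = fun x => auxV (T - t) K r x w := by
  funext x
  have h1 : deriv (fun x' => BS T K r t x' (√w)) =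
      fun x => Real.exp x * stdNormalCDF (dPlus T K r t x (√w)) :=
    funext fun u => (aux_BS_x T K r t u w hK htT hw).deriv
  unfold GammaOp
  rw [h1, (aux_BS_xx T K r t x w htT hw).deriv]
  ring

lemma aux_BS_w (T K r t x w : ℝ) (hK : 0 < K) (htT : t < T) (hw : 0 < w) :
    HasDerivAt (fun v => BS T K r t x (√v)) ((T - t) / 2 * auxV (T - t) K r x w) w := by
  have hτ : 0 < T - t := by linarith
  have h1 : 0 < √w := Real.sqrt_pos.2 hw
  have h2 : 0 < √(T - t) := Real.sqrt_pos.2 hτ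
  have e1 : (√w) ^ 2 = w := Real.sq_sqrt hw.le
  have e2 : (√(T - t)) ^ 2 = T - t := Real.sq_sqrt hτ.le
  have hp := aux_plus T K r t x w htT hw
  have hm := aux_minus T K r t x w hK htT hw
  have hs := Real.hasDerivAt_sqrt hw.ne'
  have hM : DifferentiableAt ℝ (fun v => dMinus T K r t x (√v)) w := by
    unfold dMinus
    have := hs.differentiableAt
    have hne : √w * √(T - t) ≠ 0 := by positivity
    fun_prop (disch := assumption)
  obtain ⟨D, hD⟩ : ∃ D, HasDerivAt (fun v => dMinus T K r t x (√v)) D w := ⟨_, hM.hasDerivAt⟩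
  have hP : HasDerivAt (fun v => dPlus T K r t x (√v)) (D + 1 / (2 * √w) * √(T - t)) w := by
    refine (hD.add (hs.mul_const (√(T - t)))).congr_of_eventuallyEq ?_
    filter_upwards [lt_mem_nhds hw] with v hv
    have h3 : 0 < √v := Real.sqrt_pos.2 hv
    simp only [dPlus, dMinus, Pi.add_apply]
    field_simp
    rw [e2]
    ring
  have h := ((aux_cdf_comp hP).const_mul (Real.exp x)).sub
    ((aux_cdf_comp hD).const_mul (K * Real.exp (-r * (T - t))))
  unfold BS
  refine h.congr_deriv ?_
  have e3 : √w * √(T - t) * (1 / (2 * √w) * √(T - t)) = (T - t) / 2 := by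
    field_simp
    exact e2
  linear_combination (D + 1 / (2 * √w) * √(T - t)) * hp - D * hm + auxV (T - t) K r x w * e3

lemma aux_V_x (τ K r x w : ℝ) (hτ : 0 < τ) (hw : 0 < w) :
    HasDerivAt (fun u => auxV τ K r u w)
      (auxV τ K r x w * (1 / 2 - (x - Real.log K + r * τ) / (w * τ))) x := by
  have h0 : HasDerivAt (fun u => u - (u - Real.log K + (r + w / 2) * τ) ^ 2 / (2 * (w * τ)))
      (1 / 2 - (x - Real.log K + r * τ) / (w * τ)) x := by
    refine ((hasDerivAt_id x).sub (((((hasDerivAt_id x).sub_const (Real.log K)).add_const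
      ((r + w / 2) * τ)).pow 2).div_const (2 * (w * τ)))).congr_deriv ?_
    simp
    field_simp
    ring
  unfold auxV
  refine ((h0.exp.const_mul (Real.sqrt (2 * Real.pi))⁻¹).div_const (√w * √τ)).congr_deriv ?_
  ring

lemma aux_V_xx (τ K r x w : ℝ) (hτ : 0 < τ) (hw : 0 < w) :
    GammaOp (fun u => auxV τ K r u w) x = auxV τ K r x w *
      ((x - Real.log K + r * τ) ^ 2 / (w * τ) ^ 2 - 1 / (w * τ) - 1 / 4) := by
  have h1 : deriv (fun u => auxV τ K r u w) = fun x =>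
      auxV τ K r x w * (1 / 2 - (x - Real.log K + r * τ) / (w * τ)) :=
    funext fun u => (aux_V_x τ K r u w hτ hw).deriv
  have h2 := (aux_V_x τ K r x w hτ hw).mul (((((hasDerivAt_id x).sub_const (Real.log K)).add_const
      (r * τ)).div_const (w * τ)).const_sub (1 / 2))
  unfold GammaOp
  rw [h1]
  erw [h2.deriv]
  simp
  field_simp
  ring

lemma aux_V_w (τ K r x w : ℝ) (hτ : 0 < τ) (hw : 0 < w) :
    HasDerivAt (fun v => auxV τ K r x v) (τ / 2 * (auxV τ K r x w *
      ((x - Real.log K + r * τ) ^ 2 / (w * τ) ^ 2 - 1 / (w * τ) - 1 / 4))) w := by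
  have k1 : 0 < √w := Real.sqrt_pos.2 hw
  have k2 : 0 < √τ := Real.sqrt_pos.2 hτ
  have e1 : (√w) ^ 2 = w := Real.sq_sqrt hw.le
  have hs := Real.hasDerivAt_sqrt hw.ne'
  have hid := hasDerivAt_id w
  have h0 : HasDerivAt (fun v => x - (x - Real.log K + (r + v / 2) * τ) ^ 2 / (2 * (v * τ)))
      ((x - Real.log K + r * τ) ^ 2 / (2 * w ^ 2 * τ) - τ / 8) w := by
    refine (((((((hid.div_const 2).const_add r).mul_const τ).const_add
      (x - Real.log K)).pow 2).div ((hid.mul_const τ).const_mul 2) (by simp; constructor <;> positivity)).const_sub x).congr_deriv ?_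
    simp
    field_simp
    ring
  unfold auxV
  refine ((h0.exp.const_mul (Real.sqrt (2 * Real.pi))⁻¹).div (hs.mul_const √τ)
    (by positivity)).congr_deriv ?_
  generalize Real.exp _ = E
  generalize (Real.sqrt (2 * Real.pi))⁻¹ = c
  generalize √w = s at *
  subst e1
  field_simp
  ring

/-- Second derivative of the Black–Scholes price with respect to the squared
volatility: ∂²_{σ²} BS(t,x,σ) = ((T−t)²/4)(∂²ₓ − ∂ₓ)² BS(t,x,σ). -/
theorem d2sigma_sq_bs (T K r : ℝ) (hT : 0 < T) (hK : 0 < K)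
    (t x w : ℝ) (ht0 : 0 ≤ t) (htT : t < T) (hw : 0 < w) :
    deriv (deriv (fun w' => BS T K r t x (Real.sqrt w'))) w
      = ((T - t) ^ 2 / 4)
          * GammaOp (GammaOp (fun x' => BS T K r t x' (Real.sqrt w))) x := by
  have hτ : 0 < T - t := by linarith
  rw [aux_Gamma T K r t w hK htT hw, aux_V_xx _ K r x w hτ hw]
  have h : deriv (fun w' => BS T K r t x (Real.sqrt w')) =ᶠ[nhds w]
      fun v => (T - t) / 2 * auxV (T - t) K r x v := by
    filter_upwards [lt_mem_nhds hw] with v hv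
    exact (aux_BS_w T K r t x v hK htT hv).deriv
  rw [h.deriv_eq, ((aux_V_w (T - t) K r x w hτ hw).const_mul _).deriv]
  ring
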